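/- Fix ν ≥ 2, positive integers s,t, a positive integer m, and positive integers m_1,…,m_ν; let f_{i,j} ∈ L¹([-π,π]; ℂ^{s×t}) for i,j = 1,…,ν. Suppose n is divisible by m, set n(m) = n/m, and let the block sizes be exactly n_j = m_j n(m) with m_1+⋯+m_ν = m. Let A_n be the ν×ν block matrix with (i,j) block T_{n_i,n_j}(f_{i,j}), and let Â_n be the ν×ν block matrix whose (j,k) block is the sn_j × tn_k matrix having the matrix I_{m_*} ⊗ T_{n(m)}(f_{j,k}) in its upper-left corner, where m_* = min{m_j, m_k}, and zeros elsewhere. Then for any measurable G: {A_n}_n ∼_σ G if and only if {Â_n}_n ∼_σ G; and if in addition all A_n and Â_n are Hermitian, {A_n}_n ∼_λ G if and only if {Â_n}_n ∼_λ G. -/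

import Mathlib

open MeasureTheory Filter Topology Matrix
open scoped Real

noncomputable section

/-- Sum of `F` over the eigenvalues (with multiplicity) of a square complex matrix,
the eigenvalues being the roots of the characteristic polynomial. -/
def eigSum {ι : Type*} [Fintype ι] [DecidableEq ι] (F : ℂ → ℂ) (A : Matrix ι ι ℂ) : ℂ :=
  (A.charpoly.roots.map F).sum

/-- Sum of `F` over the singular values `σ_1, …, σ_{min(#rows,#cols)}` of a rectangular
complex matrix: the singular values are the square roots of the eigenvalues of `A * Aᴴ`,
discarding the `#rows - min(#rows,#cols)` superfluous zero ones. -/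
def svSum {m n : Type*} [Fintype m] [Fintype n] [DecidableEq m]
    (F : ℝ → ℂ) (A : Matrix m n ℂ) : ℂ :=
  (∑ i, F (Real.sqrt ((Matrix.isHermitian_mul_conjTranspose_self A).eigenvalues i))) -
    ((Fintype.card m - min (Fintype.card m) (Fintype.card n) : ℕ) : ℂ) * F 0

/-- `{A_n}_n ∼_σ f` : the matrix-sequence `A` is distributed as the matrix-valued
symbol `f : Ω → ℂ^{ρ×τ}` in the sense of the singular values (Weyl sense). -/
def DistributedSV {Θ : Type*} [MeasureSpace Θ] (Ω : Set Θ)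
    {ρ τ : Type*} [Fintype ρ] [Fintype τ] [DecidableEq ρ]
    (f : Θ → Matrix ρ τ ℂ)
    {ι κ : ℕ → Type} [∀ n, Fintype (ι n)] [∀ n, Fintype (κ n)] [∀ n, DecidableEq (ι n)]
    (A : ∀ n, Matrix (ι n) (κ n) ℂ) : Prop :=
  ∀ F : ℝ → ℂ, Continuous F → HasCompactSupport F →
    Tendsto
      (fun n => ((min (Fintype.card (ι n)) (Fintype.card (κ n)) : ℕ) : ℂ)⁻¹ * svSum F (A n))
      atTop
      (𝓝 (((volume Ω).toReal : ℂ)⁻¹ *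
        ∫ θ in Ω, ((min (Fintype.card ρ) (Fintype.card τ) : ℕ) : ℂ)⁻¹ * svSum F (f θ)))

/-- `{A_n}_n ∼_λ f` : the matrix-sequence `A` is distributed as the matrix-valued
symbol `f : Ω → ℂ^{ρ×ρ}` in the sense of the eigenvalues (Weyl sense). -/
def DistributedEig {Θ : Type*} [MeasureSpace Θ] (Ω : Set Θ)
    {ρ : Type*} [Fintype ρ] [DecidableEq ρ]
    (f : Θ → Matrix ρ ρ ℂ)
    {ι : ℕ → Type} [∀ n, Fintype (ι n)] [∀ n, DecidableEq (ι n)]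
    (A : ∀ n, Matrix (ι n) (ι n) ℂ) : Prop :=
  ∀ F : ℂ → ℂ, Continuous F → HasCompactSupport F →
    Tendsto (fun n => ((Fintype.card (ι n) : ℕ) : ℂ)⁻¹ * eigSum F (A n)) atTop
      (𝓝 (((volume Ω).toReal : ℂ)⁻¹ *
        ∫ θ in Ω, ((Fintype.card ρ : ℕ) : ℂ)⁻¹ * eigSum F (f θ)))

/-- `{A_n}_n ∼_σ α I` (constant symbol `α I_s`, `α = 0` being the notion of a
zero-distributed matrix-sequence): the limit of the singular value averages is `F(α)`. -/
def DistributedSVConst (α : ℝ)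
    {ι κ : ℕ → Type} [∀ n, Fintype (ι n)] [∀ n, Fintype (κ n)] [∀ n, DecidableEq (ι n)]
    (A : ∀ n, Matrix (ι n) (κ n) ℂ) : Prop :=
  ∀ F : ℝ → ℂ, Continuous F → HasCompactSupport F →
    Tendsto
      (fun n => ((min (Fintype.card (ι n)) (Fintype.card (κ n)) : ℕ) : ℂ)⁻¹ * svSum F (A n))
      atTop (𝓝 (F α))

/-- `{A_n}_n ∼_λ α I` (constant symbol `α I_s`, `α` real): the limit of the eigenvalue
averages is `F(α)`. -/
def DistributedEigConst (α : ℝ)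
    {ι : ℕ → Type} [∀ n, Fintype (ι n)] [∀ n, DecidableEq (ι n)]
    (A : ∀ n, Matrix (ι n) (ι n) ℂ) : Prop :=
  ∀ F : ℂ → ℂ, Continuous F → HasCompactSupport F →
    Tendsto (fun n => ((Fintype.card (ι n) : ℕ) : ℂ)⁻¹ * eigSum F (A n)) atTop
      (𝓝 (F (α : ℂ)))

/-- The `k`-th Fourier coefficient (computed entrywise) of a matrix-valued function on
`[-π, π]`: `f̂_k = (1/2π) ∫_{-π}^{π} f(θ) e^{-ικθ} dθ`. -/
def fCoeff {ρ τ : Type*} (f : ℝ → Matrix ρ τ ℂ) (k : ℤ) : Matrix ρ τ ℂ :=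
  Matrix.of fun a b =>
    ((2 * π : ℝ) : ℂ)⁻¹ *
      ∫ θ in (-π : ℝ)..π, f θ a b * Complex.exp (-(Complex.I * (k : ℂ) * (θ : ℂ)))

/-- The (rectangular) block Toeplitz matrix `T_{n,n'}(f) = [f̂_{i-j}]`, of size
`sn × tn'` when `f` is `s × t` matrix-valued. -/
def blockToeplitz {ρ τ : Type*} (f : ℝ → Matrix ρ τ ℂ) (n n' : ℕ) :
    Matrix (Fin n × ρ) (Fin n' × τ) ℂ :=
  Matrix.of fun p q => fCoeff f (((p.1 : ℕ) : ℤ) - ((q.1 : ℕ) : ℤ)) p.2 q.2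

/-- The `ν × ν` block matrix with `(i,j)` block the rectangular block Toeplitz matrix
`T_{n_i,n_j}(f_{i,j})`; the row index `⟨i,(k,a)⟩` consists of the block row `i`, the
Toeplitz row `k` and the intra-block row `a`. -/
def blockMat (ν s t : ℕ) (f : Fin ν → Fin ν → ℝ → Matrix (Fin s) (Fin t) ℂ)
    (ns : Fin ν → ℕ) :
    Matrix ((i : Fin ν) × (Fin (ns i) × Fin s)) ((j : Fin ν) × (Fin (ns j) × Fin t)) ℂ :=
  Matrix.of fun P Q =>
    fCoeff (f P.1 Q.1) (((P.2.1 : ℕ) : ℤ) - ((Q.2.1 : ℕ) : ℤ)) P.2.2 Q.2.2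

/-- Recasting of the column index of a `ν × ν` block matrix along an equality `s = t`,
realizing it as a square matrix. -/
def sigCast (ν s t : ℕ) (ns : Fin ν → ℕ) (hst : s = t) :
    ((j : Fin ν) × (Fin (ns j) × Fin s)) → ((j : Fin ν) × (Fin (ns j) × Fin t)) :=
  fun Q => ⟨Q.1, (Q.2.1, Fin.cast hst Q.2.2)⟩

/-- The modified block matrix `Â_n` (for block sizes `n_j = m_j N`, `N = n(m) = n/m`):
the `(j,k)` block is the `s m_j N × t m_k N` matrix carrying `I_{m_*} ⊗ T_N(f_{j,k})`
(`m_* = min{m_j, m_k}`) in its upper-left corner and zeros elsewhere. -/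
def blockMatHat (ν s t : ℕ) (f : Fin ν → Fin ν → ℝ → Matrix (Fin s) (Fin t) ℂ)
    (mj : Fin ν → ℕ) (N : ℕ) :
    Matrix ((i : Fin ν) × (Fin (mj i * N) × Fin s))
      ((j : Fin ν) × (Fin (mj j * N) × Fin t)) ℂ :=
  Matrix.of fun P Q =>
    if (P.2.1 : ℕ) < min (mj P.1) (mj Q.1) * N ∧ (Q.2.1 : ℕ) < min (mj P.1) (mj Q.1) * N
        ∧ (P.2.1 : ℕ) / N = (Q.2.1 : ℕ) / N then
      fCoeff (f P.1 Q.1) ((((P.2.1 : ℕ) % N : ℕ) : ℤ) - (((Q.2.1 : ℕ) % N : ℕ) : ℤ))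
        P.2.2 Q.2.2
    else 0

/-!
A perturbation whose trace norm is small compared to the size of the matrices does not change the
distribution of a matrix-sequence `A`. By the resolvent identity it moves the resolvents of the
Hermitian matrices `A n` (for singular values, those of `A n * (A n)ᴴ`) by little in trace norm, and
by Stone-Weierstrass the same is then true of all continuous functions with a limit at infinity.

The differences `A_n - Â_n` are such perturbations. Cut a Toeplitz block into tiles of size `N`:
the diagonal tiles are again Toeplitz matrices of the same symbol, so that only the tiles off the
diagonal contribute to the difference. Their trace norm is `O(N ‖f‖₁)`, a Toeplitz matrix being an
average of rank one matrices, and `O(1)` for trigonometric polynomials. Density of the latter in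
`L¹` makes it `o(N)`.
-/

/-! ### Families of seminorms that are small along a filter -/

section LittleO

variable {ι 𝕜 E : Type*} [NormedField 𝕜] [SeminormedAddCommGroup E] [NormedSpace 𝕜 E]

theorem isLittleO_of_nonneg_of_le {l : Filter ι} {f g r : ι → ℝ} (hf : ∀ i, 0 ≤ f i)
    (hfg : ∀ i, f i ≤ g i) (hg : g =o[l] r) : f =o[l] r :=
  (Asymptotics.IsBigO.of_norm_le fun i =>
    (Real.norm_of_nonneg (hf i)).trans_le (hfg i)).trans_isLittleO hg

/-- The vectors `x` with `p i x = o(r i)` along `l`, for a family `p` of seminorms. -/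
def littleOSubmodule (p : ι → Seminorm 𝕜 E) (l : Filter ι) (r : ι → ℝ) : Submodule 𝕜 E where
  carrier := {x | (fun i => p i x) =o[l] r}
  zero_mem' := by simp
  add_mem' {x y} hx hy := isLittleO_of_nonneg_of_le (fun i => apply_nonneg (p i) _)
    (fun i => map_add_le_add (p i) x y) (Asymptotics.IsLittleO.add hx hy)
  smul_mem' c x hx := by
    simpa [map_smul_eq_mul] using Asymptotics.IsLittleO.const_mul_left hx ‖c‖

variable {p : ι → Seminorm 𝕜 E} {l : Filter ι} {r b : ι → ℝ}

theorem mem_littleOSubmodule {x : E} :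
    x ∈ littleOSubmodule p l r ↔ (fun i => p i x) =o[l] r := Iff.rfl

theorem isClosed_littleOSubmodule (hp : ∀ i x, p i x ≤ b i * ‖x‖) (hb : b =O[l] r) :
    IsClosed (littleOSubmodule p l r : Set E) := by
  refine isClosed_of_closure_subset fun x hx => Asymptotics.isLittleO_iff.2 fun ε hε => ?_
  obtain ⟨C, hC, hbC⟩ := hb.exists_pos
  obtain ⟨y, hy, hxy⟩ := Metric.mem_closure_iff.1 hx (ε / (2 * C)) (by positivity)
  filter_upwards [hbC.bound, Asymptotics.isLittleO_iff.1 hy (half_pos hε)] with i hi hyi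
  have hfar : p i (x - y) ≤ ε / 2 * ‖r i‖ := calc
    p i (x - y) ≤ b i * ‖x - y‖ := hp i _
    _ ≤ (C * ‖r i‖) * (ε / (2 * C)) := by
        gcongr
        · exact (le_abs_self _).trans hi
        · exact (dist_eq_norm x y ▸ hxy).le
    _ = ε / 2 * ‖r i‖ := by field_simp
  have hnear : p i y ≤ ε / 2 * ‖r i‖ := (le_abs_self _).trans hyi
  have htri : p i x ≤ p i (x - y) + p i y := by simpa using map_add_le_add (p i) (x - y) y
  rw [Real.norm_of_nonneg (apply_nonneg (p i) x)]
  linarith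

end LittleO

/-! ### The trace norm -/

section TraceNorm

open scoped Matrix.Norms.L2Operator

variable {α β γ δ : Type*} [Fintype α] [Fintype β] [Fintype γ] [Fintype δ]

theorem norm_dotProduct_le (u v : α → ℂ) :
    ‖u ⬝ᵥ v‖ ≤ ‖WithLp.toLp 2 u‖ * ‖WithLp.toLp 2 v‖ := by
  simp only [EuclideanSpace.norm_eq]
  calc ‖u ⬝ᵥ v‖ ≤ ∑ i, ‖u i‖ * ‖v i‖ := norm_sum_le_of_le _ fun i _ => (norm_mul _ _).le
    _ ≤ _ := Real.sum_mul_le_sqrt_mul_sqrt _ _ _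

/-- The functional `C ↦ tr (C X)` on matrices with the spectral norm. -/
def traceDual : Matrix α β ℂ →ₗ[ℂ] (Matrix β α ℂ →L[ℂ] ℂ) where
  toFun X := ((traceLinearMap β ℂ ℂ).comp (mulRightLinearMap β ℂ X)).toContinuousLinearMap
  map_add' X Y := by ext; simp [Matrix.mul_add]
  map_smul' c X := by ext; simp

variable [DecidableEq α]

/-- The trace norm (Schatten 1-norm), defined as the dual norm of the spectral norm for the
pairing `(C, X) ↦ tr (C X)`, which makes the triangle inequality immediate. -/
def traceNorm : Seminorm ℂ (Matrix α β ℂ) :=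
  (normSeminorm ℂ (Matrix β α ℂ →L[ℂ] ℂ)).comp traceDual

theorem norm_trace_mul_le (C : Matrix β α ℂ) (X : Matrix α β ℂ) :
    ‖(C * X).trace‖ ≤ traceNorm X * ‖C‖ := (traceDual X).le_opNorm C

theorem traceNorm_le {X : Matrix α β ℂ} {M : ℝ} (hM : 0 ≤ M)
    (h : ∀ C : Matrix β α ℂ, ‖(C * X).trace‖ ≤ M * ‖C‖) : traceNorm X ≤ M :=
  ContinuousLinearMap.opNorm_le_bound _ hM h

theorem traceNorm_sum_le {κ : Type*} (S : Finset κ) (X : κ → Matrix α β ℂ) :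
    traceNorm (∑ k ∈ S, X k) ≤ ∑ k ∈ S, traceNorm (X k) :=
  Finset.le_sum_of_subadditive traceNorm (map_zero _).le (map_add_le_add _) S X

theorem traceNorm_of_integral_le {Ω : Type*} [MeasurableSpace Ω] {μ : Measure Ω}
    {X : Ω → Matrix α β ℂ} {b : Ω → ℝ} (hX : ∀ i j, Integrable (fun ω => X ω i j) μ)
    (hb : Integrable b μ) (hXb : ∀ ω, traceNorm (X ω) ≤ b ω) :
    traceNorm (of fun i j => ∫ ω, X ω i j ∂μ) ≤ ∫ ω, b ω ∂μ := by
  refine traceNorm_le (integral_nonneg fun ω => (apply_nonneg _ _).trans (hXb ω)) fun C => ?_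
  have hint : (C * of fun i j => ∫ ω, X ω i j ∂μ).trace = ∫ ω, (C * X ω).trace ∂μ := by
    have hCX : ∀ i j, Integrable (fun ω => C j i * X ω i j) μ := fun i j => (hX i j).const_mul _
    simp only [Matrix.trace, Matrix.diag, Matrix.mul_apply, of_apply]
    rw [integral_finsetSum _ fun j _ => integrable_finsetSum _ fun i _ => hCX i j]
    simp only [integral_finsetSum _ fun i _ => hCX i _, integral_const_mul]
  rw [hint, ← integral_mul_const]
  refine norm_integral_le_of_norm_le (hb.mul_const _) (Eventually.of_forall fun ω => ?_)
  exact (norm_trace_mul_le _ _).trans (by gcongr; exact hXb ω)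

theorem l2_opNorm_one_le : ‖(1 : Matrix α α ℂ)‖ ≤ 1 := by
  rw [← diagonal_one, l2_opNorm_diagonal]
  exact (pi_norm_le_iff_of_nonneg zero_le_one).2 fun _ => by simp

theorem norm_trace_le_traceNorm (X : Matrix α α ℂ) : ‖X.trace‖ ≤ traceNorm X := calc
  ‖X.trace‖ = ‖((1 : Matrix α α ℂ) * X).trace‖ := by rw [Matrix.one_mul]
  _ ≤ traceNorm X * ‖(1 : Matrix α α ℂ)‖ := norm_trace_mul_le _ _
  _ ≤ traceNorm X := mul_le_of_le_one_right (apply_nonneg _ _) l2_opNorm_one_le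

theorem traceNorm_mul_mul_le [DecidableEq γ] [DecidableEq δ]
    (A : Matrix γ α ℂ) (X : Matrix α β ℂ) (B : Matrix β δ ℂ) :
    traceNorm (A * X * B) ≤ ‖A‖ * traceNorm X * ‖B‖ := by
  refine traceNorm_le (by positivity) fun C => ?_
  have hcycle : (C * (A * X * B)).trace = (B * C * A * X).trace := by
    rw [← Matrix.mul_assoc, Matrix.trace_mul_comm]
    simp only [Matrix.mul_assoc]
  calc ‖(C * (A * X * B)).trace‖ ≤ traceNorm X * ‖B * C * A‖ := hcycle ▸ norm_trace_mul_le _ _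
    _ ≤ traceNorm X * (‖B‖ * ‖C‖ * ‖A‖) := by
        gcongr
        exact (l2_opNorm_mul _ _).trans (by gcongr; exact l2_opNorm_mul _ _)
    _ = ‖A‖ * traceNorm X * ‖B‖ * ‖C‖ := by ring

theorem traceNorm_conjTranspose_le [DecidableEq β] (X : Matrix α β ℂ) :
    traceNorm Xᴴ ≤ traceNorm X := by
  refine traceNorm_le (apply_nonneg _ _) fun C => ?_
  calc ‖(C * Xᴴ).trace‖ = ‖(Cᴴ * X).trace‖ := by
        rw [Matrix.trace_mul_comm C, ← norm_star (Matrix.trace _), ← trace_conjTranspose]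
        simp
    _ ≤ traceNorm X * ‖C‖ := l2_opNorm_conjTranspose C ▸ norm_trace_mul_le _ _

theorem traceNorm_vecMulVec_le (u : α → ℂ) (v : β → ℂ) :
    traceNorm (vecMulVec u v) ≤ ‖WithLp.toLp 2 u‖ * ‖WithLp.toLp 2 v‖ := by
  refine traceNorm_le (by positivity) fun C => ?_
  rw [mul_vecMulVec, trace_vecMulVec]
  calc ‖(C *ᵥ u) ⬝ᵥ v‖ ≤ ‖WithLp.toLp 2 (C *ᵥ u)‖ * ‖WithLp.toLp 2 v‖ := norm_dotProduct_le _ _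
    _ ≤ (‖C‖ * ‖WithLp.toLp 2 u‖) * ‖WithLp.toLp 2 v‖ := by
        gcongr
        exact l2_opNorm_mulVec C (WithLp.toLp 2 u)
    _ = ‖WithLp.toLp 2 u‖ * ‖WithLp.toLp 2 v‖ * ‖C‖ := by ring

theorem traceNorm_single_le [DecidableEq β] (i : α) (j : β) (c : ℂ) :
    traceNorm (single i j c) ≤ ‖c‖ := by
  calc traceNorm (single i j c) = ‖c‖ * traceNorm (single i j (1 : ℂ)) := by
        rw [← map_smul_eq_mul, smul_single, smul_eq_mul, mul_one]
    _ ≤ ‖c‖ * 1 := by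
        rw [single_eq_single_vecMulVec_single]
        gcongr
        simpa using traceNorm_vecMulVec_le (Pi.single i (1 : ℂ)) (Pi.single j (1 : ℂ))
    _ = ‖c‖ := mul_one _

theorem traceNorm_diagonal_le (d : α → ℂ) : traceNorm (diagonal d) ≤ ∑ i, ‖d i‖ := by
  rw [← sum_single_eq_diagonal]
  exact (traceNorm_sum_le _ _).trans (Finset.sum_le_sum fun i _ => traceNorm_single_le i i _)

theorem traceNorm_le_sum_norm_apply (X : Matrix α β ℂ) :
    traceNorm X ≤ ∑ i, ∑ j, ‖X i j‖ := by
  classical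
  conv_lhs => rw [matrix_eq_sum_single X]
  exact (traceNorm_sum_le _ _).trans (Finset.sum_le_sum fun i _ => (traceNorm_sum_le _ _).trans
    (Finset.sum_le_sum fun j _ => traceNorm_single_le i j _))

theorem l2_opNorm_one_submatrix_id_le [DecidableEq γ] {f : γ → α} (hf : f.Injective) :
    ‖(1 : Matrix α α ℂ).submatrix id f‖ ≤ 1 := by
  have hiso : ((1 : Matrix α α ℂ).submatrix id f)ᴴ * (1 : Matrix α α ℂ).submatrix id f = 1 := by
    ext i j
    simp [Matrix.mul_apply, Matrix.one_apply, hf.eq_iff]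
  have hsq := l2_opNorm_conjTranspose_mul_self ((1 : Matrix α α ℂ).submatrix id f)
  rw [hiso] at hsq
  nlinarith [l2_opNorm_one_le (α := γ)]

theorem l2_opNorm_submatrix_le [DecidableEq δ] (C : Matrix β α ℂ) {f : γ → β} {g : δ → α}
    (hf : f.Injective) (hg : g.Injective) : ‖C.submatrix f g‖ ≤ ‖C‖ := by
  classical
  have hfac : C.submatrix f g =
      ((1 : Matrix β β ℂ).submatrix id f)ᴴ * C * (1 : Matrix α α ℂ).submatrix id g := by
    ext i j
    simp [Matrix.mul_apply, Matrix.one_apply]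
  calc ‖C.submatrix f g‖ ≤ 1 * ‖C‖ * 1 := by
        rw [hfac]
        refine (l2_opNorm_mul _ _).trans ?_
        gcongr
        · refine (l2_opNorm_mul _ _).trans ?_
          gcongr
          rw [l2_opNorm_conjTranspose]
          exact l2_opNorm_one_submatrix_id_le hf
        · exact l2_opNorm_one_submatrix_id_le hg
    _ = ‖C‖ := by ring

theorem traceNorm_le_sum_submatrix {κ θ : Type*} [Fintype κ] [Fintype θ] {μ : κ → Type*}
    {ξ : θ → Type*} [∀ k, Fintype (μ k)] [∀ l, Fintype (ξ l)] [∀ k, DecidableEq (μ k)]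
    (e : (Σ k, μ k) ≃ α) (g : (Σ l, ξ l) ≃ β)
    (X : Matrix α β ℂ) :
    traceNorm X ≤
      ∑ k, ∑ l, traceNorm (X.submatrix (fun p => e ⟨k, p⟩) fun q => g ⟨l, q⟩) := by
  refine traceNorm_le (by positivity) fun C => ?_
  have hsplit : (C * X).trace = ∑ k, ∑ l, (C.submatrix (fun q => g ⟨l, q⟩) (fun p => e ⟨k, p⟩) *
      X.submatrix (fun p => e ⟨k, p⟩) fun q => g ⟨l, q⟩).trace := by
    simp only [Matrix.trace, Matrix.diag, Matrix.mul_apply, submatrix_apply]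
    simp only [← Equiv.sum_comp g, ← Equiv.sum_comp e, Fintype.sum_sigma]
    exact (Finset.sum_congr rfl fun l _ => Finset.sum_comm).trans Finset.sum_comm
  rw [hsplit, Finset.sum_mul]
  refine norm_sum_le_of_le _ fun k _ => ?_
  rw [Finset.sum_mul]
  refine norm_sum_le_of_le _ fun l _ => (norm_trace_mul_le _ _).trans ?_
  gcongr
  exact l2_opNorm_submatrix_le C (fun _ _ h => by simpa using h) (fun _ _ h => by simpa using h)

end TraceNorm

/-! ### Functional calculus of Hermitian matrices -/

section HermitianCalculus

open scoped Matrix.Norms.L2Operator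

variable {α β : Type*} [Fintype α] [DecidableEq α] [Fintype β] {A : Matrix α α ℂ}

/-- The functional calculus `F ↦ F(A) = U diag(F(λ₁), …) Uᴴ` of a Hermitian matrix. The functions
are complex valued, unlike those of `Matrix.IsHermitian.cfc`, so that resolvents are covered. -/
def hermitianCalculus (hA : A.IsHermitian) : (ℝ → ℂ) →⋆ₐ[ℂ] Matrix α α ℂ where
  toAlgHom := (Unitary.conjStarAlgAut ℂ _ hA.eigenvectorUnitary).toAlgEquiv.toAlgHom.comp <|
    (diagonalAlgHom ℂ).comp (AlgHom.pi fun i => Pi.evalAlgHom ℂ _ (hA.eigenvalues i))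
  map_star' F := by
    change Unitary.conjStarAlgAut ℂ _ _ (diagonal (star fun i => F (hA.eigenvalues i))) = _
    rw [← diagonal_conjTranspose, ← star_eq_conjTranspose, map_star]
    rfl

variable (hA : A.IsHermitian) (F : ℝ → ℂ)

theorem hermitianCalculus_apply : hermitianCalculus hA F =
    hA.eigenvectorUnitary * diagonal (fun i => F (hA.eigenvalues i)) *
      (star hA.eigenvectorUnitary : Matrix α α ℂ) := rfl

theorem hermitianCalculus_ofReal : hermitianCalculus hA (fun x => (x : ℂ)) = A :=
  hA.spectral_theorem.symm

theorem trace_hermitianCalculus :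
    (hermitianCalculus hA F).trace = ∑ i, F (hA.eigenvalues i) := by
  rw [hermitianCalculus_apply, Matrix.trace_mul_cycle, Unitary.coe_star_mul_self, Matrix.one_mul,
    trace_diagonal]

variable {F}

theorem norm_hermitianCalculus_le {c : ℝ} (hc : 0 ≤ c) (hF : ∀ i, ‖F (hA.eigenvalues i)‖ ≤ c) :
    ‖hermitianCalculus hA F‖ ≤ c := by
  rw [hermitianCalculus_apply, ← Unitary.coe_star, CStarRing.norm_mul_coe_unitary,
    CStarRing.norm_coe_unitary_mul, l2_opNorm_diagonal]
  exact (pi_norm_le_iff_of_nonneg hc).2 hF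

theorem norm_eigenvectorUnitary_le : ‖(hA.eigenvectorUnitary : Matrix α α ℂ)‖ ≤ 1 := by
  rw [← mul_one (hA.eigenvectorUnitary : Matrix α α ℂ), CStarRing.norm_coe_unitary_mul]
  exact l2_opNorm_one_le

theorem traceNorm_hermitianCalculus_le :
    traceNorm (hermitianCalculus hA F) ≤ ∑ i, ‖F (hA.eigenvalues i)‖ := by
  rw [hermitianCalculus_apply]
  refine (traceNorm_mul_mul_le _ _ _).trans ?_
  rw [norm_star]
  calc _ ≤ 1 * (∑ i, ‖F (hA.eigenvalues i)‖) * 1 := by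
        gcongr
        · exact norm_eigenvectorUnitary_le hA
        · exact traceNorm_diagonal_le _
        · exact norm_eigenvectorUnitary_le hA
    _ = _ := by ring

theorem traceNorm_hermitianCalculus_le_rank_mul {c : ℝ} (hF₀ : F 0 = 0) (hF : ∀ x, ‖F x‖ ≤ c) :
    traceNorm (hermitianCalculus hA F) ≤ A.rank * c := calc
  traceNorm (hermitianCalculus hA F) ≤ ∑ i, ‖F (hA.eigenvalues i)‖ :=
    traceNorm_hermitianCalculus_le hA
  _ = ∑ i with hA.eigenvalues i ≠ 0, ‖F (hA.eigenvalues i)‖ := by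
    refine (Finset.sum_filter_of_ne fun i _ hi => ?_).symm
    contrapose! hi
    simp [hi, hF₀]
  _ ≤ A.rank * c := by
    rw [hA.rank_eq_card_non_zero_eigs, Fintype.card_subtype, ← nsmul_eq_mul]
    exact Finset.sum_le_card_nsmul _ _ _ fun i _ => hF _

/-- The resolvent function `x ↦ (x + i)⁻¹`. -/
def resolventFun (x : ℝ) : ℂ := ((x : ℂ) + Complex.I)⁻¹

theorem ofReal_add_I_ne_zero (x : ℝ) : (x : ℂ) + Complex.I ≠ 0 := fun h => by
  simpa using congrArg Complex.im h

theorem norm_resolventFun_sq (x : ℝ) : ‖resolventFun x‖ ^ 2 = (x ^ 2 + 1)⁻¹ := by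
  rw [resolventFun, norm_inv, inv_pow, ← Complex.normSq_eq_norm_sq, Complex.normSq_apply]
  simp [sq]

theorem norm_resolventFun_le_one (x : ℝ) : ‖resolventFun x‖ ≤ 1 := by
  rw [← sq_le_one_iff₀ (norm_nonneg _), norm_resolventFun_sq]
  exact inv_le_one_of_one_le₀ (by nlinarith [sq_nonneg x])

theorem norm_hermitianCalculus_resolventFun_le_one :
    ‖hermitianCalculus hA resolventFun‖ ≤ 1 :=
  norm_hermitianCalculus_le hA zero_le_one fun _ => norm_resolventFun_le_one _

theorem hermitianCalculus_resolventFun_mul :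
    hermitianCalculus hA resolventFun * (A + Complex.I • (1 : Matrix α α ℂ)) = 1 := by
  have hA_add : A + Complex.I • (1 : Matrix α α ℂ) =
      hermitianCalculus hA ((fun x : ℝ => (x : ℂ)) + Complex.I • (1 : ℝ → ℂ)) := by
    rw [map_add, map_smul, map_one, hermitianCalculus_ofReal]
  rw [hA_add, ← map_mul, ← map_one (hermitianCalculus hA)]
  congr 1
  ext x
  simpa [resolventFun] using inv_mul_cancel₀ (ofReal_add_I_ne_zero x)

theorem mul_hermitianCalculus_resolventFun :
    (A + Complex.I • (1 : Matrix α α ℂ)) * hermitianCalculus hA resolventFun = 1 :=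
  mul_eq_one_comm.1 (hermitianCalculus_resolventFun_mul hA)

theorem hermitianCalculus_resolventFun_sub {B : Matrix α α ℂ} (hB : B.IsHermitian) :
    hermitianCalculus hA resolventFun - hermitianCalculus hB resolventFun =
      hermitianCalculus hA resolventFun * (B - A) * hermitianCalculus hB resolventFun := by
  have hBA : B - A = (B + Complex.I • (1 : Matrix α α ℂ)) - (A + Complex.I • (1 : Matrix α α ℂ)) :=
    (add_sub_add_right_eq_sub _ _ _).symm
  rw [hBA, Matrix.mul_sub, Matrix.sub_mul, Matrix.mul_assoc, mul_hermitianCalculus_resolventFun,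
    hermitianCalculus_resolventFun_mul, Matrix.mul_one, Matrix.one_mul]

theorem traceNorm_resolventFun_sub_le {B : Matrix α α ℂ} (hB : B.IsHermitian) :
    traceNorm (hermitianCalculus hA resolventFun - hermitianCalculus hB resolventFun) ≤
      traceNorm (A - B) := by
  rw [hermitianCalculus_resolventFun_sub, map_sub_rev traceNorm A B]
  calc _ ≤ 1 * traceNorm (B - A) * 1 := (traceNorm_mul_mul_le _ _ _).trans <| by
        gcongr
        · exact norm_hermitianCalculus_resolventFun_le_one hA
        · exact norm_hermitianCalculus_resolventFun_le_one hB
    _ = traceNorm (B - A) := by ring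

theorem norm_hermitianCalculus_mul_le [DecidableEq β] (A : Matrix α β ℂ) {c : ℝ} (hc : 0 ≤ c)
    (hF : ∀ x, |x| * ‖F x‖ ^ 2 ≤ c ^ 2) :
    ‖hermitianCalculus (isHermitian_mul_conjTranspose_self A) F * A‖ ≤ c := by
  set Φ := hermitianCalculus (isHermitian_mul_conjTranspose_self A)
  have hgram : (Φ F * A) * (Φ F * A)ᴴ = Φ (F * (fun x : ℝ => (x : ℂ)) * star F) := by
    rw [map_mul, map_mul, map_star, hermitianCalculus_ofReal, conjTranspose_mul,
      star_eq_conjTranspose]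
    simp only [Matrix.mul_assoc]
  have hsq : ‖Φ F * A‖ * ‖Φ F * A‖ = ‖Φ (F * (fun x : ℝ => (x : ℂ)) * star F)‖ := by
    rw [← hgram, ← l2_opNorm_conjTranspose, ← l2_opNorm_conjTranspose_mul_self,
      conjTranspose_conjTranspose]
  refine abs_le_of_sq_le_sq' ?_ hc |>.2
  have hnorm : ∀ x, ‖(F * (fun x : ℝ => (x : ℂ)) * star F) x‖ = |x| * ‖F x‖ ^ 2 := fun x => by
    simp only [Pi.mul_apply, Pi.star_apply, norm_mul, norm_star, Complex.norm_real,
      Real.norm_eq_abs]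
    ring
  rw [sq, hsq]
  exact norm_hermitianCalculus_le _ (sq_nonneg c) fun i => (hnorm _).trans_le (hF _)

theorem abs_mul_norm_resolventFun_sq_le_one (x : ℝ) : |x| * ‖resolventFun x‖ ^ 2 ≤ 1 ^ 2 := by
  rw [norm_resolventFun_sq, one_pow, mul_inv_le_iff₀ (by positivity), one_mul, ← sq_abs]
  nlinarith [sq_nonneg (|x| - 1)]

theorem traceNorm_resolventFun_gram_sub_le (A B : Matrix α β ℂ) :
    traceNorm (hermitianCalculus (isHermitian_mul_conjTranspose_self A) resolventFun -
      hermitianCalculus (isHermitian_mul_conjTranspose_self B) resolventFun) ≤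
        2 * traceNorm (A - B) := by
  classical
  set hA := isHermitian_mul_conjTranspose_self A
  set hB := isHermitian_mul_conjTranspose_self B
  set R := hermitianCalculus hA resolventFun
  set S := hermitianCalculus hB resolventFun
  have hR : ‖R‖ ≤ 1 := norm_hermitianCalculus_resolventFun_le_one hA
  have hS : ‖S‖ ≤ 1 := norm_hermitianCalculus_resolventFun_le_one hB
  have hRA : ‖R * A‖ ≤ 1 :=
    norm_hermitianCalculus_mul_le A zero_le_one abs_mul_norm_resolventFun_sq_le_one
  have hBS : ‖Bᴴ * S‖ ≤ 1 := by
    have hadj : Bᴴ * S = (hermitianCalculus hB (star resolventFun) * B)ᴴ := by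
      rw [map_star, conjTranspose_mul, star_eq_conjTranspose, conjTranspose_conjTranspose]
    rw [hadj, l2_opNorm_conjTranspose]
    refine norm_hermitianCalculus_mul_le B zero_le_one fun x => ?_
    simpa using abs_mul_norm_resolventFun_sq_le_one x
  have hsplit : R - S = R * (B - A) * (Bᴴ * S) + R * A * (B - A)ᴴ * S := by
    rw [show R - S = R * (B * Bᴴ - A * Aᴴ) * S from hermitianCalculus_resolventFun_sub hA hB]
    simp only [conjTranspose_sub, Matrix.mul_sub, Matrix.sub_mul, Matrix.mul_assoc]
    abel
  calc traceNorm (R - S)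
      ≤ ‖R‖ * traceNorm (B - A) * ‖Bᴴ * S‖ + ‖R * A‖ * traceNorm (B - A)ᴴ * ‖S‖ := by
        rw [hsplit]
        exact (map_add_le_add _ _ _).trans
          (add_le_add (traceNorm_mul_mul_le _ _ _) (traceNorm_mul_mul_le _ _ _))
    _ ≤ 1 * traceNorm (B - A) * 1 + 1 * traceNorm (B - A) * 1 := by
        gcongr
        exact traceNorm_conjTranspose_le _
    _ = 2 * traceNorm (A - B) := by rw [map_sub_rev]; ring

end HermitianCalculus

/-! ### Trace-norm closeness of functions of Hermitian matrices -/

section TraceClose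

open scoped Matrix.Norms.L2Operator

variable {ι : Type*} {l : Filter ι} {r : ι → ℝ} {α : ι → Type*} [∀ i, Fintype (α i)]
  [∀ i, DecidableEq (α i)] {X Y : ∀ i, Matrix (α i) (α i) ℂ}
  (hX : ∀ i, (X i).IsHermitian) (hY : ∀ i, (Y i).IsHermitian)

/-- Restriction to `ℝ` of the continuous functions on its one-point compactification, i.e. of the
continuous functions on `ℝ` with a limit at infinity. -/
def onePointRestrict : C(OnePoint ℝ, ℂ) →⋆ₐ[ℂ] (ℝ → ℂ) where
  toFun H x := H x
  map_one' := rfl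
  map_mul' _ _ := rfl
  map_zero' := rfl
  map_add' _ _ := rfl
  commutes' _ := rfl
  map_star' _ := rfl

theorem norm_hermitianCalculus_onePointRestrict_le {α : Type*} [Fintype α] [DecidableEq α]
    {X : Matrix α α ℂ} (hX : X.IsHermitian) (H : C(OnePoint ℝ, ℂ)) :
    ‖hermitianCalculus hX (onePointRestrict H)‖ ≤ ‖H‖ :=
  norm_hermitianCalculus_le hX (norm_nonneg H) fun _ => H.norm_coe_le_norm _

section calculusSub

variable {α : Type*} [Fintype α] [DecidableEq α] {X Y : Matrix α α ℂ}

/-- The difference `H(X) - H(Y)` as a linear function of `H`. -/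
def calculusSub (hX : X.IsHermitian) (hY : Y.IsHermitian) :
    C(OnePoint ℝ, ℂ) →ₗ[ℂ] Matrix α α ℂ :=
  ((hermitianCalculus hX).toLinearMap - (hermitianCalculus hY).toLinearMap).comp
    onePointRestrict.toLinearMap

variable (hX : X.IsHermitian) (hY : Y.IsHermitian) (H K : C(OnePoint ℝ, ℂ))

theorem calculusSub_apply : calculusSub hX hY H =
    hermitianCalculus hX (onePointRestrict H) - hermitianCalculus hY (onePointRestrict H) := rfl

theorem calculusSub_algebraMap (c : ℂ) : calculusSub hX hY (algebraMap ℂ _ c) = 0 := by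
  rw [calculusSub_apply, AlgHomClass.commutes, AlgHomClass.commutes, AlgHomClass.commutes, sub_self]

theorem calculusSub_star : calculusSub hX hY (star H) = (calculusSub hX hY H)ᴴ := by
  simp only [calculusSub_apply, map_star, conjTranspose_sub, star_eq_conjTranspose]

theorem calculusSub_mul : calculusSub hX hY (H * K) =
    hermitianCalculus hX (onePointRestrict H) * calculusSub hX hY K * 1 +
      1 * calculusSub hX hY H * hermitianCalculus hY (onePointRestrict K) := by
  simp only [calculusSub_apply, map_mul, Matrix.mul_sub, Matrix.sub_mul, Matrix.mul_one,
    Matrix.one_mul]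
  abel

theorem traceNorm_calculusSub_mul_le : traceNorm (calculusSub hX hY (H * K)) ≤
    ‖H‖ * traceNorm (calculusSub hX hY K) + ‖K‖ * traceNorm (calculusSub hX hY H) := by
  have hHX := norm_hermitianCalculus_onePointRestrict_le hX H
  have hKY := norm_hermitianCalculus_onePointRestrict_le hY K
  rw [calculusSub_mul]
  calc _ ≤ ‖H‖ * traceNorm (calculusSub hX hY K) * 1 +
        1 * traceNorm (calculusSub hX hY H) * ‖K‖ := by
        refine (map_add_le_add _ _ _).trans (add_le_add ?_ ?_)
        · exact (traceNorm_mul_mul_le _ _ _).trans (by gcongr; exact l2_opNorm_one_le)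
        · exact (traceNorm_mul_mul_le _ _ _).trans (by gcongr; exact l2_opNorm_one_le)
    _ = _ := by ring

theorem traceNorm_calculusSub_le :
    traceNorm (calculusSub hX hY H) ≤ 2 * (X.rank + Y.rank : ℝ) * ‖H‖ := by
  -- Subtracting the constant `H 0` makes `H` vanish on the kernels of `X` and `Y`.
  obtain ⟨G, hG⟩ : ∃ G, G = H - algebraMap ℂ _ (H (0 : ℝ)) := ⟨_, rfl⟩
  have hG_apply : ∀ x : ℝ, onePointRestrict G x = H x - H (0 : ℝ) := fun x => by subst hG; rfl
  have hG₀ : onePointRestrict G 0 = 0 := (hG_apply 0).trans (sub_self _)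
  have hG_le : ∀ x, ‖onePointRestrict G x‖ ≤ 2 * ‖H‖ := fun x => calc
    ‖onePointRestrict G x‖ = ‖H x - H (0 : ℝ)‖ := by rw [hG_apply]
    _ ≤ ‖H x‖ + ‖H (0 : ℝ)‖ := norm_sub_le _ _
    _ ≤ 2 * ‖H‖ := by linarith [H.norm_coe_le_norm x, H.norm_coe_le_norm (0 : ℝ)]
  have hHG : calculusSub hX hY H = calculusSub hX hY G := by
    rw [hG, map_sub, calculusSub_algebraMap, sub_zero]
  calc traceNorm (calculusSub hX hY H) ≤ X.rank * (2 * ‖H‖) + Y.rank * (2 * ‖H‖) := by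
        rw [hHG]
        exact (map_sub_le_add _ _ _).trans <| add_le_add
          (traceNorm_hermitianCalculus_le_rank_mul hX hG₀ hG_le)
          (traceNorm_hermitianCalculus_le_rank_mul hY hG₀ hG_le)
    _ = _ := by ring

end calculusSub

/-- The resolvent function `x ↦ (x + i)⁻¹` on the one-point compactification of `ℝ`. -/
def resolventOnePoint : C(OnePoint ℝ, ℂ) :=
  OnePoint.continuousMapMk
    ⟨resolventFun, Continuous.inv₀ (by fun_prop) ofReal_add_I_ne_zero⟩ 0 <| by
      rw [coclosedCompact_eq_cocompact]
      refine tendsto_inv₀_cobounded.comp (tendsto_norm_atTop_iff_cobounded.1 ?_)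
      refine tendsto_atTop_mono (fun x => ?_) tendsto_norm_cocompact_atTop
      simpa using Complex.abs_re_le_norm ((x : ℂ) + Complex.I)

theorem injective_resolventOnePoint : Function.Injective resolventOnePoint := by
  have hne : ∀ x : ℝ, resolventFun x ≠ 0 := fun x => inv_ne_zero (ofReal_add_I_ne_zero x)
  have hinj : Function.Injective resolventFun :=
    inv_injective.comp <| (add_left_injective Complex.I).comp Complex.ofReal_injective
  intro x y hxy
  induction x using OnePoint.rec <;> induction y using OnePoint.rec
  · rfl
  · exact absurd hxy.symm (hne _)
  · exact absurd hxy (hne _)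
  · exact congrArg _ (hinj hxy)

/-- The functions `H` with `‖H(X_i) - H(Y_i)‖₁ = o(r_i)` along `l`. -/
def traceCloseSubalgebra (l : Filter ι) (r : ι → ℝ) : StarSubalgebra ℂ C(OnePoint ℝ, ℂ) where
  __ := littleOSubmodule (fun i => traceNorm.comp (calculusSub (hX i) (hY i))) l r
  mul_mem' {H K} hH hK := isLittleO_of_nonneg_of_le (fun _ => apply_nonneg traceNorm _)
    (fun i => traceNorm_calculusSub_mul_le (hX i) (hY i) H K)
    ((hK.const_mul_left ‖H‖).add (hH.const_mul_left ‖K‖))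
  algebraMap_mem' c := mem_littleOSubmodule.2 <| by
    simp [calculusSub_algebraMap]
  star_mem' {H} hH := isLittleO_of_nonneg_of_le (fun _ => apply_nonneg traceNorm _)
    (fun i => (congrArg traceNorm (calculusSub_star (hX i) (hY i) H)).trans_le
      (traceNorm_conjTranspose_le _)) hH

theorem mem_traceCloseSubalgebra {H : C(OnePoint ℝ, ℂ)} :
    H ∈ traceCloseSubalgebra hX hY l r ↔
      (fun i => traceNorm (calculusSub (hX i) (hY i) H)) =o[l] r := Iff.rfl

variable (hXr : (fun i => ((X i).rank : ℝ)) =O[l] r) (hYr : (fun i => ((Y i).rank : ℝ)) =O[l] r)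
  (hres : (fun i => traceNorm (hermitianCalculus (hX i) resolventFun -
    hermitianCalculus (hY i) resolventFun)) =o[l] r)

include hXr hYr hres

-- The resolvent alone separates the points of `OnePoint ℝ`, so Stone-Weierstrass applies.
theorem traceCloseSubalgebra_eq_top : traceCloseSubalgebra hX hY l r = ⊤ := by
  have hclosed : IsClosed (traceCloseSubalgebra hX hY l r : Set C(OnePoint ℝ, ℂ)) :=
    isClosed_littleOSubmodule (fun i H => traceNorm_calculusSub_le (hX i) (hY i) H) <|
      (hXr.add hYr).const_mul_left 2
  have hdense : (traceCloseSubalgebra hX hY l r).topologicalClosure = ⊤ :=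
    ContinuousMap.starSubalgebra_topologicalClosure_eq_top_of_separatesPoints _ fun x y hxy =>
      ⟨_, ⟨resolventOnePoint, (mem_traceCloseSubalgebra hX hY).2 hres, rfl⟩,
        injective_resolventOnePoint.ne hxy⟩
  exact top_le_iff.1 (hdense.ge.trans (StarSubalgebra.topologicalClosure_minimal le_rfl hclosed))

theorem sum_eigenvalues_sub_isLittleO {F : ℝ → ℂ} (hF : Continuous F) {c : ℂ}
    (hFc : Tendsto F (cocompact ℝ) (𝓝 c)) :
    (fun i => ∑ a, F ((hX i).eigenvalues a) - ∑ a, F ((hY i).eigenvalues a)) =o[l] r := by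
  rw [← coclosedCompact_eq_cocompact] at hFc
  have hmem : OnePoint.continuousMapMk ⟨F, hF⟩ c hFc ∈ traceCloseSubalgebra hX hY l r :=
    traceCloseSubalgebra_eq_top hX hY hXr hYr hres ▸ StarSubalgebra.mem_top
  refine (Asymptotics.IsBigO.of_norm_le fun i => ?_).trans_isLittleO hmem
  rw [← trace_hermitianCalculus, ← trace_hermitianCalculus, ← Matrix.trace_sub]
  exact norm_trace_le_traceNorm _

end TraceClose

/-! ### Distributions of asymptotically close matrix-sequences -/

section Distribution

open scoped ComplexOrder

theorem tendsto_inv_mul_iff_of_isLittleO {ι : Type*} {l : Filter ι} {d : ι → ℕ} {U V : ι → ℂ}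
    {z : ℂ} (h : (fun n => U n - V n) =o[l] fun n => (d n : ℝ)) :
    Tendsto (fun n => (d n : ℂ)⁻¹ * U n) l (𝓝 z) ↔
      Tendsto (fun n => (d n : ℂ)⁻¹ * V n) l (𝓝 z) := by
  refine tendsto_iff_of_dist ?_
  have hnorm : ∀ n, dist ((d n : ℂ)⁻¹ * U n) ((d n : ℂ)⁻¹ * V n) = ‖U n - V n‖ / d n := fun n => by
    rw [dist_eq_norm, ← mul_sub, norm_mul, norm_inv, Complex.norm_natCast, div_eq_inv_mul]
  simpa only [hnorm] using h.norm_left.tendsto_div_nhds_zero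

theorem eigSum_eq_sum_eigenvalues {α : Type*} [Fintype α] [DecidableEq α] {A : Matrix α α ℂ}
    (hA : A.IsHermitian) (F : ℂ → ℂ) : eigSum F A = ∑ i, F (hA.eigenvalues i) := by
  rw [eigSum, hA.roots_charpoly_eq_eigenvalues, Multiset.map_map]
  rfl

theorem svSum_sub_svSum {α β : Type*} [Fintype α] [DecidableEq α] [Fintype β]
    (F : ℝ → ℂ) (A B : Matrix α β ℂ) : svSum F A - svSum F B =
      ∑ i, F √|(isHermitian_mul_conjTranspose_self A).eigenvalues i| -
        ∑ i, F √|(isHermitian_mul_conjTranspose_self B).eigenvalues i| := by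
  have habs : ∀ (M : Matrix α β ℂ) i, |(isHermitian_mul_conjTranspose_self M).eigenvalues i| =
      (isHermitian_mul_conjTranspose_self M).eigenvalues i := fun M i =>
    abs_of_nonneg ((posSemidef_self_mul_conjTranspose M).eigenvalues_nonneg i)
  simp only [svSum, habs, sub_sub_sub_cancel_right]

theorem tendsto_comp_sqrt_abs_cocompact {F : ℝ → ℂ} (hF : HasCompactSupport F) :
    Tendsto (fun x => F √|x|) (cocompact ℝ) (𝓝 0) := by
  have hsqrt : Tendsto (fun x : ℝ => √|x|) (cocompact ℝ) (cocompact ℝ) :=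
    (Real.tendsto_sqrt_atTop.comp tendsto_norm_cocompact_atTop).mono_right atTop_le_cocompact
  exact hF.is_zero_at_infty.comp hsqrt

variable {Θ ρ τ : Type*} [MeasureSpace Θ] [Fintype ρ] [Fintype τ] [DecidableEq ρ] {Ω : Set Θ}
  {ι κ : ℕ → Type} [∀ n, Fintype (ι n)] [∀ n, DecidableEq (ι n)]

theorem distributedEig_iff_of_traceNorm_sub_isLittleO {f : Θ → Matrix ρ ρ ℂ}
    {A B : ∀ n, Matrix (ι n) (ι n) ℂ} (hA : ∀ n, (A n).IsHermitian) (hB : ∀ n, (B n).IsHermitian)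
    (h : (fun n => traceNorm (A n - B n)) =o[atTop] fun n => (Fintype.card (ι n) : ℝ)) :
    DistributedEig Ω f A ↔ DistributedEig Ω f B := by
  have hrank : ∀ M : ∀ n, Matrix (ι n) (ι n) ℂ,
      (fun n => ((M n).rank : ℝ)) =O[atTop] fun n => (Fintype.card (ι n) : ℝ) := fun M =>
    .of_norm_le fun n => by simpa using (M n).rank_le_card_width
  refine forall₃_congr fun F hF hFc => tendsto_inv_mul_iff_of_isLittleO ?_
  simp only [eigSum_eq_sum_eigenvalues (hA _), eigSum_eq_sum_eigenvalues (hB _)]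
  refine sum_eigenvalues_sub_isLittleO hA hB (hrank A) (hrank B) ?_
    (hF.comp Complex.continuous_ofReal) (c := 0) ?_
  · exact isLittleO_of_nonneg_of_le (fun _ => apply_nonneg traceNorm _)
      (fun n => traceNorm_resolventFun_sub_le (hA n) (hB n)) h
  · exact (hFc.comp_isClosedEmbedding
      Complex.isometry_ofReal.isClosedEmbedding).is_zero_at_infty

theorem distributedSV_iff_of_traceNorm_sub_isLittleO [∀ n, Fintype (κ n)] {f : Θ → Matrix ρ τ ℂ}
    {A B : ∀ n, Matrix (ι n) (κ n) ℂ} (h : (fun n => traceNorm (A n - B n)) =o[atTop]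
      fun n => ((min (Fintype.card (ι n)) (Fintype.card (κ n)) : ℕ) : ℝ)) :
    DistributedSV Ω f A ↔ DistributedSV Ω f B := by
  have hrank : ∀ M : ∀ n, Matrix (ι n) (κ n) ℂ, (fun n => ((M n * (M n)ᴴ).rank : ℝ)) =O[atTop]
      fun n => ((min (Fintype.card (ι n)) (Fintype.card (κ n)) : ℕ) : ℝ) := fun M =>
    .of_norm_le fun n => by
      rw [rank_self_mul_conjTranspose, Real.norm_natCast]
      exact Nat.cast_le.2 (le_min (rank_le_card_height _) (rank_le_card_width _))
  refine forall₃_congr fun F hF hFc => tendsto_inv_mul_iff_of_isLittleO ?_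
  simp only [svSum_sub_svSum]
  refine sum_eigenvalues_sub_isLittleO _ _ (hrank A) (hrank B) ?_
    (F := fun x => F √|x|) (by fun_prop) (tendsto_comp_sqrt_abs_cocompact hFc)
  exact isLittleO_of_nonneg_of_le (fun _ => apply_nonneg traceNorm _)
    (fun n => traceNorm_resolventFun_gram_sub_le (A n) (B n)) (h.const_mul_left 2)

end Distribution

/-! ### Blocks of large Toeplitz matrices -/

section OffDiagPart

open scoped Matrix.Norms.L2Operator

variable {α β γ : Type*} [DecidableEq γ]

/-- The part of a matrix lying off the diagonal blocks, where `c` and `d` assign to rows and columns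
the labels of their blocks. -/
def offDiagPart (c : α → γ) (d : β → γ) : Matrix α β ℂ →ₗ[ℂ] Matrix α β ℂ where
  toFun X := of fun i j => if c i = d j then 0 else X i j
  map_add' X Y := by ext i j; by_cases h : c i = d j <;> simp [h]
  map_smul' z X := by ext i j; by_cases h : c i = d j <;> simp [h]

theorem offDiagPart_apply (c : α → γ) (d : β → γ) (X : Matrix α β ℂ) (i : α) (j : β) :
    offDiagPart c d X i j = if c i = d j then 0 else X i j := rfl

/-- The orthogonal projection onto the coordinates with label `l`. -/
def labelProj [DecidableEq α] (c : α → γ) (l : γ) : Matrix α α ℂ :=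
  diagonal fun i => if c i = l then 1 else 0

variable [Fintype α] [Fintype β] [DecidableEq α]

theorem norm_labelProj_le_one (c : α → γ) (l : γ) : ‖labelProj c l‖ ≤ 1 := by
  rw [labelProj, l2_opNorm_diagonal]
  exact (pi_norm_le_iff_of_nonneg zero_le_one).2 fun i => by split_ifs <;> simp

theorem offDiagPart_eq_sub_sum [DecidableEq β] {c : α → γ} {S : Finset γ} (hS : ∀ i, c i ∈ S)
    (d : β → γ) (X : Matrix α β ℂ) :
    offDiagPart c d X = X - ∑ l ∈ S, labelProj c l * X * labelProj d l := by
  ext i j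
  by_cases h : c i = d j
  · have hj : d j ∈ S := h ▸ hS i
    simp [offDiagPart_apply, labelProj, Matrix.sum_apply, h, hj]
  · simp [offDiagPart_apply, labelProj, Matrix.sum_apply, h]

theorem traceNorm_offDiagPart_le {c : α → γ} {S : Finset γ} (hS : ∀ i, c i ∈ S) (d : β → γ)
    (X : Matrix α β ℂ) : traceNorm (offDiagPart c d X) ≤ (S.card + 1) * traceNorm X := by
  classical
  have hblock : ∀ l ∈ S, traceNorm (labelProj c l * X * labelProj d l) ≤ traceNorm X :=
    fun l _ => calc
      _ ≤ 1 * traceNorm X * 1 := (traceNorm_mul_mul_le _ _ _).trans <| by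
          gcongr
          · exact norm_labelProj_le_one c l
          · exact norm_labelProj_le_one d l
      _ = traceNorm X := by ring
  calc traceNorm (offDiagPart c d X) ≤ traceNorm X + ∑ _l ∈ S, traceNorm X := by
        rw [offDiagPart_eq_sub_sum hS]
        refine (map_sub_le_add _ _ _).trans ?_
        gcongr
        exact (traceNorm_sum_le _ _).trans (Finset.sum_le_sum hblock)
    _ = _ := by rw [Finset.sum_const, nsmul_eq_mul]; ring

end OffDiagPart

section Toeplitz

open AddCircle

theorem norm_toLp_fourier {T : ℝ} (n : ℕ) (e : Fin n → ℤ) (x : AddCircle T) :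
    ‖WithLp.toLp 2 fun p => fourier (e p) x‖ = √n := by
  simp [EuclideanSpace.norm_eq, fourier_apply, Circle.norm_coe]

variable {T : ℝ} [Fact (0 < T)]

/-- The `n × n'` Toeplitz matrix of an integrable symbol on the circle, as a linear function of the
symbol. -/
def toeplitz (n n' : ℕ) : Lp ℂ 1 (haarAddCircle (T := T)) →ₗ[ℂ] Matrix (Fin n) (Fin n') ℂ where
  toFun ψ := of fun p q => fourierCoeff ψ ((p : ℤ) - q)
  map_add' φ ψ := by
    ext p q
    simp only [of_apply, Matrix.add_apply, fourierCoeff_congr_ae (Lp.coeFn_add φ ψ)]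
    rw [fourierCoeff.add (L1.integrable_coeFn φ) (L1.integrable_coeFn ψ), Pi.add_apply]
  map_smul' z ψ := by
    ext p q
    simp only [of_apply, fourierCoeff_congr_ae (Lp.coeFn_smul z ψ), fourierCoeff.const_smul]
    rfl

theorem toeplitz_apply {n n' : ℕ} (ψ : Lp ℂ 1 (haarAddCircle (T := T))) (p : Fin n) (q : Fin n') :
    toeplitz n n' ψ p q = fourierCoeff ψ ((p : ℤ) - q) := rfl

theorem toeplitz_fourierLp_apply {n n' : ℕ} (k : ℤ) (p : Fin n) (q : Fin n') :
    toeplitz n n' (fourierLp (T := T) 1 k) p q = if (p : ℤ) - q = k then 1 else 0 := by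
  rw [toeplitz_apply, fourierCoeff_congr_ae (coeFn_fourierLp 1 k), fourierCoeff_fourier,
    Pi.single_apply]

theorem traceNorm_toeplitz_le (n n' : ℕ) (ψ : Lp ℂ 1 (haarAddCircle (T := T))) :
    traceNorm (toeplitz n n' ψ) ≤ √n * √n' * ‖ψ‖ := by
  -- A Toeplitz matrix is the average of the rank one matrices `ψ(x) e(x) e(x)ᴴ`.
  set X : AddCircle T → Matrix (Fin n) (Fin n') ℂ := fun x =>
    ψ x • vecMulVec (fun p : Fin n => fourier (-(p : ℤ)) x)
      (fun q : Fin n' => fourier (q : ℤ) x) with hX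
  have hX_apply : ∀ x p q, X x p q = fourier (-((p : ℤ) - q)) x • ψ x := fun x p q => by
    simp only [hX, Matrix.smul_apply, vecMulVec_apply, ← fourier_add, smul_eq_mul]
    ring_nf
  have hX_norm : ∀ x, traceNorm (X x) ≤ √n * √n' * ‖ψ x‖ := fun x => by
    rw [hX, map_smul_eq_mul, mul_comm]
    gcongr
    exact (traceNorm_vecMulVec_le _ _).trans_eq <|
      congrArg₂ _ (norm_toLp_fourier n _ x) (norm_toLp_fourier n' _ x)
  have hψ := L1.integrable_coeFn ψ
  calc traceNorm (toeplitz n n' ψ) = traceNorm (of fun p q => ∫ x, X x p q ∂haarAddCircle) := by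
        simp only [hX_apply]
        rfl
    _ ≤ ∫ x, √n * √n' * ‖ψ x‖ ∂haarAddCircle :=
        traceNorm_of_integral_le (fun p q => by simpa only [hX_apply] using hψ.fourier_smul _)
          (hψ.norm.const_mul _) hX_norm
    _ = √n * √n' * ‖ψ‖ := by rw [integral_const_mul, L1.norm_eq_integral_norm]

theorem div_lt_of_fin_mul {a N : ℕ} (p : Fin (a * N)) : (p : ℕ) / N < a :=
  Nat.div_lt_of_lt_mul (p.2.trans_eq (mul_comm _ _))

theorem mod_mem_of_div_ne {N p q : ℕ} {k : ℤ} (hpq : (p : ℤ) - q = k) (hne : p / N ≠ q / N) :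
    p % N ∈ Finset.range k.natAbs ∪ Finset.Ico (N - k.natAbs) N := by
  have hN : 0 < N := Nat.pos_of_ne_zero fun hN => hne (by simp [hN])
  have hp := Nat.div_add_mod p N
  have hlt := Nat.mod_lt p hN
  simp only [Finset.mem_union, Finset.mem_range, Finset.mem_Ico]
  by_contra! hmid
  refine hne (Nat.div_eq_of_lt_le ?_ ?_).symm
  · rw [mul_comm]
    omega
  · rw [Nat.succ_mul, mul_comm]
    omega

theorem card_filter_sub_eq_div_ne_le (a n' N : ℕ) (k : ℤ) :
    ({R : Fin (a * N) × Fin n' | (R.1 : ℤ) - R.2 = k ∧ (R.1 : ℕ) / N ≠ R.2 / N} : Finset _).card ≤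
      a * (2 * k.natAbs) := by
  set band := Finset.range k.natAbs ∪ Finset.Ico (N - k.natAbs) N
  have hband : band.card ≤ 2 * k.natAbs := by
    refine (Finset.card_union_le _ _).trans ?_
    simp only [Finset.card_range, Nat.card_Ico]
    omega
  calc _ ≤ (Finset.range a ×ˢ band).card := by
        refine Finset.card_le_card_of_injOn (fun R => ((R.1 : ℕ) / N, (R.1 : ℕ) % N)) ?_ ?_
        · intro R hR
          obtain ⟨hk, hne⟩ := by simpa using hR
          exact Finset.mem_product.2 ⟨Finset.mem_range.2 (div_lt_of_fin_mul R.1),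
            mod_mem_of_div_ne hk hne⟩
        · intro R hR R' hR' heq
          obtain ⟨hk, -⟩ := by simpa using hR
          obtain ⟨hk', -⟩ := by simpa using hR'
          obtain ⟨hdiv, hmod⟩ := Prod.mk.inj heq
          have hrow : (R.1 : ℕ) = R'.1 := by
            rw [← Nat.div_add_mod (R.1 : ℕ) N, hdiv, hmod, Nat.div_add_mod]
          exact Prod.ext (Fin.ext hrow) (Fin.ext (by omega))
    _ ≤ a * (2 * k.natAbs) := by
        rw [Finset.card_product, Finset.card_range]
        gcongr

theorem traceNorm_offDiagPart_toeplitz_fourierLp_le (a n' N : ℕ) (k : ℤ) :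
    traceNorm (offDiagPart (fun p : Fin (a * N) => (p : ℕ) / N) (fun q : Fin n' => (q : ℕ) / N)
      (toeplitz (a * N) n' (fourierLp (T := T) 1 k))) ≤ (a * (2 * k.natAbs) : ℕ) := by
  refine (traceNorm_le_sum_norm_apply _).trans ?_
  have hentry : ∀ R : Fin (a * N) × Fin n',
      ‖offDiagPart (fun p : Fin (a * N) => (p : ℕ) / N) (fun q : Fin n' => (q : ℕ) / N)
        (toeplitz (a * N) n' (fourierLp (T := T) 1 k)) R.1 R.2‖ =
      if (R.1 : ℤ) - R.2 = k ∧ (R.1 : ℕ) / N ≠ R.2 / N then 1 else 0 := fun R => by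
    rw [offDiagPart_apply, toeplitz_fourierLp_apply]
    split_ifs <;> simp_all
  rw [← Finset.sum_product', Finset.univ_product_univ, Finset.sum_congr rfl fun R _ => hentry R,
    Finset.sum_boole]
  exact Nat.cast_le.2 (card_filter_sub_eq_div_ne_le a n' N k)

theorem traceNorm_offDiagPart_toeplitz_le (a n' N : ℕ) (ψ : Lp ℂ 1 (haarAddCircle (T := T))) :
    traceNorm (offDiagPart (fun p : Fin (a * N) => (p : ℕ) / N) (fun q : Fin n' => (q : ℕ) / N)
      (toeplitz (a * N) n' ψ)) ≤ (a + 1) * (√(a * N : ℕ) * √n') * ‖ψ‖ := by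
  refine (traceNorm_offDiagPart_le (S := Finset.range a)
    (fun p => Finset.mem_range.2 (div_lt_of_fin_mul p)) _ _).trans ?_
  rw [Finset.card_range, mul_assoc]
  gcongr
  exact traceNorm_toeplitz_le _ _ _

theorem traceNorm_offDiagPart_toeplitz_isLittleO (a b : ℕ) (ψ : Lp ℂ 1 (haarAddCircle (T := T))) :
    (fun N : ℕ => traceNorm (offDiagPart (fun p : Fin (a * N) => (p : ℕ) / N)
      (fun q : Fin (b * N) => (q : ℕ) / N) (toeplitz (a * N) (b * N) ψ))) =o[atTop]
        fun N => (N : ℝ) := by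
  set S := littleOSubmodule (fun N : ℕ => traceNorm.comp
    ((offDiagPart (fun p : Fin (a * N) => (p : ℕ) / N) fun q : Fin (b * N) => (q : ℕ) / N).comp
      (toeplitz (T := T) (a * N) (b * N)))) atTop (fun N => (N : ℝ))
  have hclosed : IsClosed (S : Set (Lp ℂ 1 (haarAddCircle (T := T)))) := by
    refine isClosed_littleOSubmodule
      (fun N φ => traceNorm_offDiagPart_toeplitz_le a (b * N) N φ) ?_
    have hsqrt : ∀ N : ℕ, (a + 1 : ℝ) * (√(a * N : ℕ) * √(b * N : ℕ)) =
        (a + 1) * (√a * √b) * N := fun N => by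
      rw [Nat.cast_mul, Nat.cast_mul, Real.sqrt_mul a.cast_nonneg, Real.sqrt_mul b.cast_nonneg,
        mul_mul_mul_comm, Real.mul_self_sqrt N.cast_nonneg, ← mul_assoc]
    simpa only [hsqrt] using Asymptotics.isBigO_const_mul_self _ _ _
  have hfourier : Submodule.span ℂ (Set.range (fourierLp (T := T) 1)) ≤ S := by
    rw [Submodule.span_le]
    rintro _ ⟨k, rfl⟩
    exact isLittleO_of_nonneg_of_le (fun _ => apply_nonneg traceNorm _)
      (fun N => traceNorm_offDiagPart_toeplitz_fourierLp_le a (b * N) N k)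
      ((Asymptotics.isLittleO_const_id_atTop _).comp_tendsto tendsto_natCast_atTop_atTop)
  have htop : (⊤ : Submodule ℂ (Lp ℂ 1 (haarAddCircle (T := T)))) ≤ S :=
    (span_fourierLp_closure_eq_top ENNReal.one_ne_top).ge.trans
      (Submodule.topologicalClosure_minimal _ hfourier hclosed)
  exact htop (Submodule.mem_top (x := ψ))

end Toeplitz

/-! ### Block matrices -/

section BlockMatrices

open AddCircle

local instance fact_zero_lt_two_pi : Fact (0 < 2 * π) := ⟨Real.two_pi_pos⟩

theorem integrable_liftIoc_two_pi {g : ℝ → ℂ} (hg : IntervalIntegrable g volume (-π) π) :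
    Integrable (liftIoc (2 * π) (-π) g) haarAddCircle := by
  have hendpoint : -π + 2 * π = π := by ring
  rw [← memLp_one_iff_integrable]
  refine (MemLp.memLp_liftIoc ?_).haarAddCircle
  rw [memLp_one_iff_integrable, hendpoint]
  exact (intervalIntegrable_iff_integrableOn_Ioc_of_le (neg_le_self Real.pi_pos.le)).1 hg

theorem fourierCoeff_liftIoc_two_pi (g : ℝ → ℂ) (k : ℤ) :
    fourierCoeff (liftIoc (2 * π) (-π) g) k =
      ((2 * π : ℝ) : ℂ)⁻¹ * ∫ θ in (-π)..π, g θ * Complex.exp (-(Complex.I * k * θ)) := by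
  have hendpoint : -π + 2 * π = π := by ring
  rw [fourierCoeff_eq_intervalIntegral _ _ (-π), hendpoint, one_div, Complex.real_smul,
    Complex.ofReal_inv]
  congr 1
  refine intervalIntegral.integral_congr_ae (ae_of_all _ fun θ hθ => ?_)
  replace hθ : θ ∈ Set.Ioc (-π) (-π + 2 * π) := by
    rwa [hendpoint, ← Set.uIoc_of_le (neg_le_self Real.pi_pos.le)]
  have hpi : (π : ℂ) ≠ 0 := Complex.ofReal_ne_zero.2 Real.pi_ne_zero
  rw [liftIoc_coe_apply hθ, fourier_coe_apply, smul_eq_mul, mul_comm]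
  congr 2
  push_cast
  field_simp

/-- The index `((i, a), p)`, with the scalar block `(i, a)` first, as an index `(i, (p, a))` of
`blockMat`. -/
def blockIndexEquiv {κ α : Type*} (β : κ → Type*) : (Σ k : κ × α, β k.1) ≃ Σ i, β i × α where
  toFun P := ⟨P.1.1, P.2, P.1.2⟩
  invFun Q := ⟨(Q.1, Q.2.2), Q.2.1⟩
  left_inv _ := rfl
  right_inv _ := rfl

variable {ν s t : ℕ}

theorem card_blockMat_index (mj : Fin ν → ℕ) (r N : ℕ) :
    Fintype.card ((i : Fin ν) × (Fin (mj i * N) × Fin r)) = (∑ i, mj i) * r * N := by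
  simp only [Fintype.card_sigma, Fintype.card_prod, Fintype.card_fin, ← Finset.sum_mul]
  ring

theorem blockMat_sub_blockMatHat_apply (f : Fin ν → Fin ν → ℝ → Matrix (Fin s) (Fin t) ℂ)
    (mj : Fin ν → ℕ) (N : ℕ) (P : (i : Fin ν) × (Fin (mj i * N) × Fin s))
    (Q : (j : Fin ν) × (Fin (mj j * N) × Fin t)) :
    (blockMat ν s t f (fun j => mj j * N) - blockMatHat ν s t f mj N) P Q =
      if (P.2.1 : ℕ) / N = Q.2.1 / N then 0
      else fCoeff (f P.1 Q.1) ((P.2.1 : ℤ) - Q.2.1) P.2.2 Q.2.2 := by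
  obtain ⟨i, p, a⟩ := P
  obtain ⟨j, q, b⟩ := Q
  simp only [Matrix.sub_apply, blockMat, blockMatHat, Matrix.of_apply]
  split_ifs with hhat hdiv hdiv
  · have hmod : ((p % N : ℕ) : ℤ) - (q % N : ℕ) = (p : ℤ) - q := by
      have hp := Nat.div_add_mod p N
      have hq := Nat.div_add_mod q N
      rw [hdiv] at hp
      omega
    rw [hmod, sub_self]
  · exact absurd hhat.2.2 hdiv
  · have hN : 0 < N := Nat.pos_of_mul_pos_left (p.pos)
    have hlt := lt_min (div_lt_of_fin_mul p) (hdiv.trans_lt (div_lt_of_fin_mul q))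
    exact absurd ⟨(Nat.div_lt_iff_lt_mul hN).1 hlt, (Nat.div_lt_iff_lt_mul hN).1 (hdiv ▸ hlt), hdiv⟩
      hhat
  · exact sub_zero _

theorem traceNorm_blockMat_sub_blockMatHat_isLittleO (mj : Fin ν → ℕ)
    {f : Fin ν → Fin ν → ℝ → Matrix (Fin s) (Fin t) ℂ}
    (hf : ∀ i j a b, IntervalIntegrable (fun θ => f i j θ a b) volume (-π) π) :
    (fun N => traceNorm (blockMat ν s t f (fun j => mj j * N) - blockMatHat ν s t f mj N))
      =o[atTop] fun N => (N : ℝ) := by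
  let ψ (k : Fin ν × Fin s) (l : Fin ν × Fin t) : Lp ℂ 1 (haarAddCircle (T := 2 * π)) :=
    (integrable_liftIoc_two_pi (hf k.1 l.1 k.2 l.2)).toL1 _
  have hblock : ∀ N (k : Fin ν × Fin s) (l : Fin ν × Fin t),
      (blockMat ν s t f (fun j => mj j * N) - blockMatHat ν s t f mj N).submatrix
        (fun p => blockIndexEquiv (fun i => Fin (mj i * N)) ⟨k, p⟩)
        (fun q => blockIndexEquiv (fun j => Fin (mj j * N)) ⟨l, q⟩) =
      offDiagPart (fun p : Fin _ => (p : ℕ) / N) (fun q : Fin _ => (q : ℕ) / N)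
        (toeplitz (mj k.1 * N) (mj l.1 * N) (ψ k l)) := fun N k l => by
    ext p q
    rw [offDiagPart_apply, toeplitz_apply, fourierCoeff_congr_ae (Integrable.coeFn_toL1 _),
      fourierCoeff_liftIoc_two_pi]
    exact blockMat_sub_blockMatHat_apply f mj N _ _
  refine isLittleO_of_nonneg_of_le (fun N => apply_nonneg traceNorm _)
    (fun N => traceNorm_le_sum_submatrix (blockIndexEquiv fun i => Fin (mj i * N))
      (blockIndexEquiv fun j => Fin (mj j * N)) _) ?_
  simp only [hblock]
  exact .fun_sum fun k _ => .fun_sum fun l _ => traceNorm_offDiagPart_toeplitz_isLittleO _ _ (ψ k l)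

end BlockMatrices

/-- for block sizes exactly `n_j = m_j n(m)` (with `n` divisible by
`m`, `n(m) = n/m`, reparametrized by `N = n(m)`), the sequences `{A_n}_n` and
`{Â_n}_n` have the same singular value symbols, and — when all the matrices involved
are Hermitian — the same eigenvalue symbols. -/
theorem hat_equivalence
    (ν s t m : ℕ) (hν : 2 ≤ ν) (hs : 0 < s) (ht : 0 < t) (hm : 0 < m)
    (mj : Fin ν → ℕ) (hmj : ∀ j, 0 < mj j) (hmsum : ∑ j, mj j = m)
    (f : Fin ν → Fin ν → ℝ → Matrix (Fin s) (Fin t) ℂ)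
    (hf : ∀ i j a b, IntervalIntegrable (fun θ => f i j θ a b) volume (-π) π) :
    (∀ (l s' t' : ℕ) (Ω : Set (Fin l → ℝ)), MeasurableSet Ω →
      0 < volume Ω → volume Ω < ⊤ →
      ∀ G : (Fin l → ℝ) → Matrix (Fin s') (Fin t') ℂ,
        (∀ a b, Measurable fun θ => G θ a b) →
        (DistributedSV Ω G (fun N => blockMat ν s t f (fun j => mj j * N)) ↔
          DistributedSV Ω G (fun N => blockMatHat ν s t f mj N))) ∧
    (∀ hst : s = t,
      (∀ N, ((blockMat ν s t f (fun j => mj j * N)).submatrix id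
        (sigCast ν s t (fun j => mj j * N) hst)).IsHermitian) →
      (∀ N, ((blockMatHat ν s t f mj N).submatrix id
        (sigCast ν s t (fun j => mj j * N) hst)).IsHermitian) →
      ∀ (l s' : ℕ) (Ω : Set (Fin l → ℝ)), MeasurableSet Ω →
        0 < volume Ω → volume Ω < ⊤ →
        ∀ G : (Fin l → ℝ) → Matrix (Fin s') (Fin s') ℂ,
          (∀ a b, Measurable fun θ => G θ a b) →
          (DistributedEig Ω G
              (fun N => (blockMat ν s t f (fun j => mj j * N)).submatrix id
                (sigCast ν s t (fun j => mj j * N) hst)) ↔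
            DistributedEig Ω G
              (fun N => (blockMatHat ν s t f mj N).submatrix id
                (sigCast ν s t (fun j => mj j * N) hst)))) := by
  have hsmall := traceNorm_blockMat_sub_blockMatHat_isLittleO mj hf
  have hrate : ∀ {r : ℕ}, 0 < r → ∀ N : ℕ,
      N ≤ Fintype.card ((i : Fin ν) × (Fin (mj i * N) × Fin r)) := fun hr N => by
    rw [card_blockMat_index, hmsum]
    exact Nat.le_mul_of_pos_left N (Nat.mul_pos hm hr)
  refine ⟨fun _ _ _ _ _ _ _ _ _ => ?_, ?_⟩
  · exact distributedSV_iff_of_traceNorm_sub_isLittleO <| hsmall.trans_isBigO <|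
      .of_norm_le fun N =>
        (Real.norm_natCast N).trans_le (Nat.cast_le.2 (le_min (hrate hs N) (hrate ht N)))
  · rintro rfl hA hB _ _ _ _ _ _ _ _
    exact distributedEig_iff_of_traceNorm_sub_isLittleO hA hB <| hsmall.trans_isBigO <|
      .of_norm_le fun N => (Real.norm_natCast N).trans_le (Nat.cast_le.2 (hrate hs N))

end
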